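/- arXiv:math/0008167 — 6 statements merged into one kernel-verified Lean document; each statement's English description precedes it below -/
import Mathlib

section
/- Let k be an algebraically closed field and K a non-trivial field extension of k. Let V and W be k-vector spaces and φ₁, φ₂ : V → W be k-linear maps with the property that for every pair of scalars c₁, c₂ ∈ K, not both zero, the K-linear map c₁·(φ₁ ⊗ 1) + c₂·(φ₂ ⊗ 1) : V ⊗_k K → W ⊗_k K is a bijection. Then V = 0 and W = 0. -/
open TensorProduct

open Polynomial in
lemma exists_functional {k K V : Type*} [Field k] [Field K] [Algebra k K]
    [AddCommGroup V] [Module k V] (T : Module.End k V)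
    (hT : ∀ p : k[X], p ≠ 0 → Function.Injective (aeval T p))
    (t : K) (ht : Transcendental k t) (v : V) (hv : v ≠ 0) :
    ∃ g : V →ₗ[k] K, (∀ w, g (T w) = t * g w) ∧ g v ≠ 0 := by
  let F := FractionRing k[X]
  let j := LocalizedModule.mkLinearMap (nonZeroDivisors k[X]) (Module.AEval' T)
  have hj : j (Module.AEval'.of T v) ≠ 0 := by
    intro h0
    have h1 : Module.AEval'.of T v ∈ LinearMap.ker j := h0
    rw [LocalizedModule.mem_ker_mkLinearMap_iff] at h1
    obtain ⟨p, hp, h2⟩ := h1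
    have hp0 : p ≠ 0 := nonZeroDivisors.ne_zero hp
    apply hv
    apply hT p hp0
    rw [map_zero]
    exact h2
  have hf : ∃ f : Module.Dual F (LocalizedModule (nonZeroDivisors k[X]) (Module.AEval' T)),
      f (j (Module.AEval'.of T v)) ≠ 0 := by
    by_contra! hc
    exact hj ((Module.forall_dual_apply_eq_zero_iff F _).1 hc)
  obtain ⟨f, hf⟩ := hf
  have hinj : Function.Injective (aeval t : k[X] →ₐ[k] K) :=
    transcendental_iff_injective.1 ht
  let ψ : F →+* K := IsFractionRing.lift (g := (aeval t : k[X] →ₐ[k] K).toRingHom) hinj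
  have hψ : ∀ p : k[X], ψ (algebraMap k[X] F p) = aeval t p := fun p =>
    IsFractionRing.lift_algebraMap hinj p
  have key : ∀ (p : k[X]) (w : Module.AEval' T),
      ψ (f (j (p • w))) = aeval t p * ψ (f (j w)) := by
    intro p w
    rw [map_smul, ← algebraMap_smul F p (j w), map_smul, smul_eq_mul, map_mul, hψ]
  refine ⟨{ toFun := fun w => ψ (f (j (Module.AEval'.of T w)))
            map_add' := fun x y => by simp only [map_add]
            map_smul' := fun c x => ?_ }, ?_, ?_⟩
  · have h := key (C c) (Module.AEval'.of T x)
    rw [aeval_C, Module.AEval.C_smul] at h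
    rw [RingHom.id_apply, map_smul, h, Algebra.smul_def]
  · intro w
    have h := key X (Module.AEval'.of T w)
    rw [aeval_X, Module.AEval'.X_smul_of] at h
    exact h
  · simpa using hf

/-- **Lemma 4.1 of Benson–Carlson–Rickard** (Lemma 2 of the paper).
Let `k` be an algebraically closed field and `K` a non-trivial field extension of `k`.
If `φ₁ φ₂ : V →ₗ[k] W` are linear maps such that for every pair of scalars
`c₁ c₂ : K`, not both zero, the base-changed map
`c₁ • (φ₁ ⊗ 1) + c₂ • (φ₂ ⊗ 1) : V ⊗ₖ K → W ⊗ₖ K` is bijective,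
then `V = 0` and `W = 0`. -/
theorem stmt0 (k : Type*) [Field k] [IsAlgClosed k]
    (K : Type*) [Field K] [Algebra k K]
    (hK : ¬ Function.Surjective (algebraMap k K))
    (V W : Type*) [AddCommGroup V] [Module k V] [AddCommGroup W] [Module k W]
    (φ₁ φ₂ : V →ₗ[k] W)
    (h : ∀ c₁ c₂ : K, ¬(c₁ = 0 ∧ c₂ = 0) →
      Function.Bijective (c₁ • LinearMap.baseChange K φ₁ + c₂ • LinearMap.baseChange K φ₂)) :
    Subsingleton V ∧ Subsingleton W := by

  have hbij : ∀ a b : k, ¬(a = 0 ∧ b = 0) → Function.Bijective (a • φ₁ + b • φ₂) := by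
    intro a b hab
    have h1 := h (algebraMap k K a) (algebraMap k K b) (by simpa using hab)
    rw [← Module.FaithfullyFlat.lTensor_bijective_iff_bijective k K]
    convert h1 using 1
    ext x
    induction x using TensorProduct.induction_on with
    | zero => simp
    | add x y hx hy => rw [map_add, map_add, hx, hy]
    | tmul c v => simp [TensorProduct.tmul_add]
  have h1 : Function.Bijective φ₁ := by simpa using hbij 1 0 (by simp)
  let e := LinearEquiv.ofBijective φ₁ h1
  suffices hV : Subsingleton V from ⟨hV, e.symm.toEquiv.subsingleton⟩
  by_contra hV
  rw [not_subsingleton_iff_nontrivial] at hV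
  obtain ⟨v, hv⟩ := exists_ne (0 : V)
  let T : Module.End k V := e.symm.toLinearMap ∘ₗ φ₂
  have hφT : ∀ w, φ₁ (T w) = φ₂ w := fun w => e.apply_symm_apply (φ₂ w)
  have hspec : ∀ a, a ∉ spectrum k T := by
    intro a
    rw [spectrum.notMem_iff, Module.End.isUnit_iff]
    have h2 := e.symm.bijective.comp (hbij a (-1) (by simp))
    convert h2 using 1
    ext w
    apply h1.1
    change _ = e (e.symm _)
    rw [e.apply_symm_apply]
    simp [Algebra.algebraMap_eq_smul_one, hφT, sub_eq_add_neg]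
  have hT : ∀ p : Polynomial k, p ≠ 0 → Function.Injective (Polynomial.aeval T p) := by
    intro p hp
    have hu : IsUnit (Polynomial.aeval T p) := by
      rw [(IsAlgClosed.splits p).eq_prod_roots, map_mul, Polynomial.aeval_C]
      refine IsUnit.mul ((IsUnit.mk0 _ (by simpa using hp)).map _) ?_
      by_contra hc
      obtain ⟨a, ha, -⟩ := spectrum.exists_mem_of_not_isUnit_aeval_prod hc
      exact hspec a ha
    exact ((Module.End.isUnit_iff _).1 hu).1
  obtain ⟨t, ht⟩ := not_forall.1 hK
  have htr : Transcendental k t := by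
    intro hal
    apply ht
    exact minpoly.mem_range_of_degree_eq_one k t
      (IsAlgClosed.degree_eq_one_of_irreducible k (minpoly.irreducible hal.isIntegral))
  obtain ⟨g, hg, hgv⟩ := exists_functional T hT t htr v hv
  let G : K ⊗[k] W →ₗ[K] K :=
    (Algebra.TensorProduct.lmul'' k (S := K)).toLinearMap ∘ₗ
      LinearMap.baseChange K (g ∘ₗ e.symm.toLinearMap)
  have hG : ∀ c w, G (c ⊗ₜ w) = c * g (e.symm w) := fun c w => by
    simp [G, Algebra.TensorProduct.lmul'']
  have hG0 : ∀ x, G ((t • LinearMap.baseChange K φ₁ + (-1 : K) • LinearMap.baseChange K φ₂) x)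
      = 0 := by
    intro x
    induction x using TensorProduct.induction_on with
    | zero => simp
    | add x y hx hy => rw [map_add, map_add, hx, hy, add_zero]
    | tmul c w =>
      have e1 : e.symm (φ₁ w) = w := e.symm_apply_apply w
      have e2 : e.symm (φ₂ w) = T w := rfl
      simp only [LinearMap.add_apply, LinearMap.smul_apply, LinearMap.baseChange_tmul, map_add,
        map_smul, hG, e1, e2, hg, smul_eq_mul]
      ring
  obtain ⟨x, hx⟩ := (h t (-1) (by simp)).2 ((1 : K) ⊗ₜ[k] φ₁ v)
  have h3 := hG0 x
  rw [hx, hG, one_mul] at h3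
  exact hgv (by rwa [show e.symm (φ₁ v) = v from e.symm_apply_apply v] at h3)
end

section
/- Let k be an algebraically closed field, V and W finite-dimensional k-vector spaces, and φ₁, φ₂ : V → W k-linear maps such that for every pair of scalars c₁, c₂ ∈ k, not both zero, the linear map c₁φ₁ + c₂φ₂ : V → W is a bijection. Then V = 0 and W = 0. -/
/-- **Dade-type lemma, finite-dimensional case.**
If `k` is algebraically closed, `V, W` finite-dimensional `k`-vector spaces and
`φ₁ φ₂ : V →ₗ[k] W` are such that `c₁ • φ₁ + c₂ • φ₂` is bijective for every pair of
scalars `c₁ c₂ : k` not both zero, then `V = 0` and `W = 0`. -/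
theorem stmt1 (k : Type*) [Field k] [IsAlgClosed k]
    (V W : Type*) [AddCommGroup V] [Module k V] [AddCommGroup W] [Module k W]
    [FiniteDimensional k V] [FiniteDimensional k W]
    (φ₁ φ₂ : V →ₗ[k] W)
    (h : ∀ c₁ c₂ : k, ¬(c₁ = 0 ∧ c₂ = 0) →
      Function.Bijective (c₁ • φ₁ + c₂ • φ₂)) :
    Subsingleton V ∧ Subsingleton W := by
  have h1 : Function.Bijective φ₁ := by
    have := h 1 0 (by simp)
    simpa using this
  have hV : Subsingleton V := by
    by_contra hn
    rw [not_subsingleton_iff_nontrivial] at hn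
    let e := LinearEquiv.ofBijective φ₁ h1
    obtain ⟨c, hc⟩ := Module.End.exists_eigenvalue (e.symm.toLinearMap ∘ₗ φ₂)
    obtain ⟨v, hv⟩ := hc.exists_hasEigenvector
    have h2 : e.symm (φ₂ v) = c • v := hv.apply_eq_smul
    have h3 : φ₂ v = c • φ₁ v := by
      have h4 : φ₂ v = e (c • v) := by rw [← h2, e.apply_symm_apply]
      rw [h4, map_smul]
      rfl
    apply hv.2
    apply (h (-c) 1 (by simp)).1
    simp [h3]
  exact ⟨hV, h1.2.subsingleton⟩
end

section
/- Let k be a field, A a finite-dimensional associative unital k-algebra, and ε : A → k a k-algebra homomorphism; write k_ε for the 1-dimensional A-module k on which a ∈ A acts as multiplication by ε(a). Assume that every simple A-module is isomorphic to k_ε, and that an A-module is injective if and only if it is projective. Then an A-module M (not necessarily finite-dimensional) is projective if and only if Ext¹_A(k_ε, M) = 0. -/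
universe u

open CategoryTheory

/-- The 1-dimensional `A`-module `k_ε` given by an augmentation `ε : A → k`:
the underlying vector space is `k`, and `a ∈ A` acts as multiplication by `ε a`. -/
def kEps (k : Type u) (A : Type u) [Field k] [Ring A] [Algebra k A]
    (ε : A →ₐ[k] k) : Type u := k

instance (k A : Type u) [Field k] [Ring A] [Algebra k A] (ε : A →ₐ[k] k) :
    AddCommGroup (kEps k A ε) := inferInstanceAs (AddCommGroup k)

instance (k A : Type u) [Field k] [Ring A] [Algebra k A] (ε : A →ₐ[k] k) :
    Module A (kEps k A ε) := Module.compHom k (ε.toRingHom : A →+* k)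

lemma ext_one_subsingleton_iff {k : Type u} [Field k] {A : Type u} [Ring A] [Algebra k A]
    (X Y : ModuleCat.{u} A) (P : ProjectiveResolution X) :
    Subsingleton (((Ext k (ModuleCat.{u} A) 1).obj (Opposite.op X)).obj Y) ↔
      ∀ f : P.complex.X 1 ⟶ Y, P.complex.d 2 1 ≫ f = 0 →
        ∃ h : P.complex.X 0 ⟶ Y, P.complex.d 1 0 ≫ h = f := by
  rw [← ModuleCat.isZero_iff_subsingleton, (P.isoExt (R := k) 1 Y).isZero_iff,
    ← HomologicalComplex.exactAt_iff_isZero_homology,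
    HomologicalComplex.exactAt_iff' _ 0 1 2 (by simp) (by simp),
    ShortComplex.moduleCat_exact_iff]
  rfl

lemma extend_of_ext {A : Type u} [Ring A]
    (X Y : ModuleCat.{u} A) (P : ProjectiveResolution X)
    (H : ∀ f : P.complex.X 1 ⟶ Y, P.complex.d 2 1 ≫ f = 0 →
        ∃ h : P.complex.X 0 ⟶ Y, P.complex.d 1 0 ≫ h = f)
    (N E : Type u) [AddCommGroup N] [AddCommGroup E] [Module A N] [Module A E]
    (i : N →ₗ[A] E) (hi : Function.Injective i) (p : E →ₗ[A] X) (hp : Function.Surjective p)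
    (hip : Function.Exact i p) (f : N →ₗ[A] Y) : ∃ f' : E →ₗ[A] Y, f' ∘ₗ i = f := by
  let π : P.complex.X 0 ⟶ X := P.π.f 0
  have hex : Function.Exact (P.complex.d 1 0).hom π.hom := by
    have := P.exact₀
    rw [ShortComplex.ShortExact.moduleCat_exact_iff_function_exact] at this
    exact this
  have hdd : P.complex.d 2 1 ≫ P.complex.d 1 0 = 0 := by simp
  have : Epi (ModuleCat.ofHom p) := (ModuleCat.epi_iff_surjective _).2 hp
  let s : P.complex.X 0 ⟶ ModuleCat.of A E := Projective.factorThru π (ModuleCat.ofHom p)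
  have hs : ∀ x, p (s.hom x) = π.hom x := fun x =>
    congrArg (fun q => q.hom x) (Projective.factorThru_comp π (ModuleCat.ofHom p))
  have hr : ∀ y, s.hom ((P.complex.d 1 0).hom y) ∈ LinearMap.range i := fun y => by
    have h1 : p (s.hom ((P.complex.d 1 0).hom y)) = 0 := by
      rw [hs]; exact hex.apply_apply_eq_zero y
    exact (hip _).1 h1
  let t : P.complex.X 1 →ₗ[A] N :=
    (LinearEquiv.ofInjective i hi).symm.toLinearMap ∘ₗ
      LinearMap.codRestrict (LinearMap.range i) (s.hom ∘ₗ (P.complex.d 1 0).hom) hr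
  have ht : ∀ y, i (t y) = s.hom ((P.complex.d 1 0).hom y) := fun y => by
    have := congrArg Subtype.val ((LinearEquiv.ofInjective i hi).apply_symm_apply
      (LinearMap.codRestrict (LinearMap.range i) (s.hom ∘ₗ (P.complex.d 1 0).hom) hr y))
    exact this
  obtain ⟨h, hh⟩ := H (ModuleCat.ofHom (f ∘ₗ t)) (by
    ext z
    have h1 : t ((P.complex.d 2 1).hom z) = 0 := hi (by
      rw [ht, map_zero]
      have : (P.complex.d 1 0).hom ((P.complex.d 2 1).hom z) = 0 :=
        congrArg (fun q => q.hom z) hdd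
      rw [this, map_zero])
    change f (t ((P.complex.d 2 1).hom z)) = 0
    rw [h1, map_zero])
  have hh' : ∀ y, h.hom ((P.complex.d 1 0).hom y) = f (t y) := fun y =>
    congrArg (fun q => q.hom y) hh
  let c : (N × P.complex.X 0) →ₗ[A] E := i.coprod s.hom
  have hc : Function.Surjective c := fun e => by
    have hπ : Function.Surjective π.hom := (ModuleCat.epi_iff_surjective π).1
      (inferInstanceAs (Epi (P.π.f 0)))
    obtain ⟨x, hx⟩ := hπ (p e)
    obtain ⟨n, hn⟩ := (hip (e - s.hom x)).1 (by rw [map_sub, hs, hx, sub_self])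
    exact ⟨(n, x), by simp [c, hn]⟩
  let g : (N × P.complex.X 0) →ₗ[A] Y := f.coprod h.hom
  have hg : LinearMap.ker c ≤ LinearMap.ker g := by
    rintro ⟨n, x⟩ hnx
    have hnx : i n + s.hom x = 0 := hnx
    have hx : π.hom x = 0 := by
      rw [← hs, eq_neg_of_add_eq_zero_right hnx, map_neg, hip.apply_apply_eq_zero, neg_zero]
    obtain ⟨y, rfl⟩ := (hex x).1 hx
    have hn : n + t y = 0 := hi (by rw [map_add, ht, hnx, map_zero])
    change f n + h.hom ((P.complex.d 1 0).hom y) = 0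
    rw [hh', ← map_add, hn, map_zero]
  refine ⟨(LinearMap.ker c).liftQ g hg ∘ₗ (c.quotKerEquivOfSurjective hc).symm.toLinearMap, ?_⟩
  ext n
  have h1 : (c.quotKerEquivOfSurjective hc).symm (i n) = Submodule.Quotient.mk (n, 0) := by
    rw [LinearEquiv.symm_apply_eq]
    simp [c]
  change (LinearMap.ker c).liftQ g hg ((c.quotKerEquivOfSurjective hc).symm (i n)) = f n
  rw [h1, Submodule.liftQ_apply]
  simp [g]

/-- **Proposition 2 of the paper** (algebraic form). Let `A` be a finite-dimensional
`k`-algebra with augmentation `ε : A → k` such that every simple `A`-module is isomorphic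
to `k_ε`, and such that an `A`-module is injective iff it is projective.  Then an
`A`-module `M` (not necessarily finite-dimensional) is projective if and only if
`Ext¹_A(k_ε, M) = 0`. -/
theorem stmt2 (k : Type u) [Field k] (A : Type u) [Ring A] [Algebra k A]
    [FiniteDimensional k A] (ε : A →ₐ[k] k)
    (hsimple : ∀ (S : Type u) [AddCommGroup S] [Module A S],
      IsSimpleModule A S → Nonempty (S ≃ₗ[A] kEps k A ε))
    (hinjproj : ∀ (N : Type u) [AddCommGroup N] [Module A N],
      Module.Injective A N ↔ Module.Projective A N)
    (M : Type u) [AddCommGroup M] [Module A M] :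
    Module.Projective A M ↔
      Subsingleton (((Ext k (ModuleCat.{u} A) 1).obj
        (Opposite.op (ModuleCat.of A (kEps k A ε)))).obj (ModuleCat.of A M)) := by
  have P : ProjectiveResolution (ModuleCat.of A (kEps k A ε)) := ProjectiveResolution.of _
  rw [ext_one_subsingleton_iff _ _ P, ← hinjproj]
  constructor
  · intro hM f hf
    have := Module.injective_object_of_injective_module A M
    have hex : (ShortComplex.mk (P.complex.d 2 1) (P.complex.d 1 0) (by simp)).Exact :=
      P.exact_succ 0
    exact ⟨hex.descToInjective f hf, hex.comp_descToInjective f hf⟩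
  · intro H
    have : IsArtinian A A := isArtinian_of_tower k inferInstance
    have : IsNoetherian A A := isNoetherian_of_tower k inferInstance
    refine Module.Baer.injective ?_
    intro I
    induction I using WellFoundedGT.induction with
    | ind I ih =>
    intro g
    by_cases hI : I = ⊤
    · subst hI
      exact ⟨g ∘ₗ Submodule.topEquiv.symm.toLinearMap, fun x hx => rfl⟩
    obtain ⟨J, hJ⟩ := exists_covBy_of_wellFoundedLT (a := I) (by simpa using hI)
    have hle : I ≤ J := hJ.le
    have hS := (covBy_iff_quot_is_simple hle).1 hJ
    obtain ⟨e⟩ := hsimple _ hS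
    obtain ⟨g', hg'⟩ := extend_of_ext _ _ P H I J (Submodule.inclusion hle)
      (Submodule.inclusion_injective hle)
      (e.toLinearMap ∘ₗ (Submodule.comap J.subtype I).mkQ)
      (e.surjective.comp (Submodule.mkQ_surjective _))
      (by
        intro x
        have h0 : (e.toLinearMap ∘ₗ (Submodule.comap J.subtype I).mkQ) x = 0 ↔ x ∈ Submodule.comap J.subtype I := by
          refine (LinearEquiv.map_eq_zero_iff e).trans ?_
          rw [Submodule.mkQ_apply, Submodule.Quotient.mk_eq_zero]
        refine h0.trans ⟨fun hx => ⟨⟨x, hx⟩, rfl⟩, ?_⟩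
        rintro ⟨y, rfl⟩
        exact y.2) g
    obtain ⟨G, hG⟩ := ih J hJ.lt g'
    refine ⟨G, fun x hx => ?_⟩
    rw [hG x (hle hx), ← hg']
    rfl
end

section
/- Let p be a prime, k an algebraically closed field of characteristic p, n ≥ 1, and A = k[X₁,…,Xₙ]/(X₁^p,…,Xₙ^p), with xᵢ ∈ A the image of Xᵢ. Let M be a finite-dimensional A-module. Then M is projective over A if and only if for every tuple (c₁,…,cₙ) ∈ kⁿ with not all cᵢ zero, M is projective as a module over k[t]/(t^p), where t acts through the k-algebra homomorphism k[t]/(t^p) → A sending t to u = c₁x₁ + ⋯ + cₙxₙ. -/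
universe u

set_option synthInstance.maxHeartbeats 400000
set_option maxHeartbeats 800000

open MvPolynomial

/-- The algebra `A = k[X₁,…,Xₙ]/(X₁^p,…,Xₙ^p)`. -/
abbrev DadeAlgebra (k : Type u) [CommRing k] (p n : ℕ) : Type u :=
  MvPolynomial (Fin n) k ⧸
    Ideal.span (Set.range fun i : Fin n => (MvPolynomial.X i : MvPolynomial (Fin n) k) ^ p)

/-- `xᵢ ∈ A`, the image of `Xᵢ`. -/
noncomputable def xbar (k : Type u) [CommRing k] (p n : ℕ) (i : Fin n) : DadeAlgebra k p n :=
  Ideal.Quotient.mkₐ k _ (MvPolynomial.X i)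

lemma xbar_pow_eq_zero (k : Type u) [CommRing k] (p n : ℕ) (i : Fin n) :
    xbar k p n i ^ p = 0 := by
  rw [xbar, ← map_pow, Ideal.Quotient.mkₐ_eq_mk, Ideal.Quotient.eq_zero_iff_mem]
  exact Ideal.subset_span ⟨i, rfl⟩

/-- The `k`-algebra homomorphism `k[t]/(t^p) → A` sending `t` to `u = c₁x₁ + ⋯ + cₙxₙ`. -/
noncomputable def dadeHom (k : Type u) [Field k] (p n : ℕ) [Fact p.Prime] [CharP k p]
    (c : Fin n → k) :
    (Polynomial k ⧸ Ideal.span {(Polynomial.X : Polynomial k) ^ p}) →ₐ[k] DadeAlgebra k p n :=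
  Ideal.Quotient.liftₐ _ (Polynomial.aeval (∑ i, c i • xbar k p n i)) (by
    have hu : (∑ i, c i • xbar k p n i) ^ p = 0 := by
      have h1 : (∑ i, c i • xbar k p n i) = Ideal.Quotient.mkₐ k _
          (∑ i, c i • (MvPolynomial.X i : MvPolynomial (Fin n) k)) := by
        rw [map_sum]
        simp only [map_smul, xbar]
      rw [h1, ← map_pow, Ideal.Quotient.mkₐ_eq_mk, Ideal.Quotient.eq_zero_iff_mem,
        sum_pow_char]
      refine Ideal.sum_mem _ fun i _ => ?_
      rw [smul_pow]
      exact Submodule.smul_of_tower_mem _ _ (Ideal.subset_span ⟨i, rfl⟩)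
    intro a ha
    have hle : Ideal.span {(Polynomial.X : Polynomial k) ^ p} ≤
        RingHom.ker (Polynomial.aeval (∑ i, c i • xbar k p n i)).toRingHom := by
      rw [Ideal.span_le, Set.singleton_subset_iff]
      simp [RingHom.mem_ker, hu]
    exact hle ha)

/-- `t` acts freely on `M`: the kernel of `t^(p-1)` is contained in the image of `t`. -/
def ActsFreely {R : Type*} [CommRing R] (p : ℕ) (t : R) (M : Type*) [AddCommGroup M]
    [Module R M] : Prop :=
  ∀ m : M, t ^ (p - 1) • m = 0 → ∃ m' : M, m = t • m'

lemma ActsFreely.ker_le {R : Type*} [CommRing R] {p : ℕ} {t : R} {M : Type*}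
    [AddCommGroup M] [Module R M] (h : ActsFreely p t M) (m : M) (hm : t • m = 0) :
    ∃ m' : M, m = t ^ (p - 1) • m' := by
  have key : ∀ j, j ≤ p - 1 → ∃ m' : M, m = t ^ j • m' := by
    intro j
    induction j with
    | zero => intro _; exact ⟨m, by simp⟩
    | succ j ih =>
      intro hj
      obtain ⟨m', hm'⟩ := ih (by omega)
      have h1 : t ^ (p - 1) • m' = 0 := by
        obtain ⟨d, hd⟩ := Nat.exists_eq_add_of_le hj
        rw [hd, show j + 1 + d = d + 1 + j by ring, pow_add, mul_smul, ← hm', pow_succ, mul_smul,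
          hm, smul_zero]
      obtain ⟨m'', h2⟩ := h m' h1
      exact ⟨m'', by rw [hm', h2, pow_succ, mul_smul]⟩
  exact key _ le_rfl

/-- The binomial identity behind the argument. -/
lemma dade_identity (k : Type*) [Field k] (p : ℕ) [Fact p.Prime] [CharP k p]
    {R : Type*} [CommRing R] [Algebra k R] (a y : R) :
    ∃ S : R, (y - a) ^ (p - 1) = y ^ (p - 1) + a * S ∧
      (y - a) ^ (p - 1) = y * S + a ^ (p - 1) := by
  have hp : p - 1 + 1 = p := Nat.succ_pred_prime Fact.out
  have poly : ∃ S : MvPolynomial (Fin 2) k,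
      (X 1 - X 0) ^ (p - 1) = X 1 ^ (p - 1) + X 0 * S ∧
      (X 1 - X 0) ^ (p - 1) = X 1 * S + X 0 ^ (p - 1) := by
    have hS := geom_sum₂_mul (X 1 : MvPolynomial (Fin 2) k) (X 0) (p - 1)
    set S := ∑ i ∈ Finset.range (p - 1),
      (X 1 : MvPolynomial (Fin 2) k) ^ i * X 0 ^ (p - 1 - 1 - i)
    have hne : (X 1 - X 0 : MvPolynomial (Fin 2) k) ≠ 0 := by
      rw [sub_ne_zero]
      intro h
      exact absurd (X_injective h) (by decide)
    have h1 : (X 1 - X 0 : MvPolynomial (Fin 2) k) ^ (p - 1) = X 1 ^ (p - 1) + X 0 * S := by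
      apply mul_right_cancel₀ hne
      rw [← pow_succ, hp, sub_pow_char]
      have e1 : (X 1 : MvPolynomial (Fin 2) k) ^ p = X 1 ^ (p - 1) * X 1 := by
        rw [← pow_succ, hp]
      have e0 : (X 0 : MvPolynomial (Fin 2) k) ^ p = X 0 ^ (p - 1) * X 0 := by
        rw [← pow_succ, hp]
      rw [e1, e0]
      linear_combination -(X 0) * hS
    refine ⟨S, h1, ?_⟩
    rw [h1]
    linear_combination -hS
  obtain ⟨S, h1, h2⟩ := poly
  let φ : MvPolynomial (Fin 2) k →ₐ[k] R := aeval ![a, y]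
  refine ⟨φ S, ?_, ?_⟩
  · simpa [φ] using congrArg φ h1
  · simpa [φ] using congrArg φ h2

/-- Eigenvector lemma for pencils. -/
lemma pencil_eigen {k V W : Type*} [Field k] [IsAlgClosed k] [AddCommGroup V] [Module k V]
    [FiniteDimensional k V] [AddCommGroup W] [Module k W] (B C : V →ₗ[k] W)
    (hker : LinearMap.ker C ≤ LinearMap.ker B) (hrange : LinearMap.range B ≤ LinearMap.range C)
    (hne : LinearMap.ker C ≠ ⊤) : ∃ (l : k) (v : V), C v ≠ 0 ∧ B v = l • C v := by
  obtain ⟨T, hT⟩ := Module.projective_lifting_property C.rangeRestrict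
    (B.codRestrict (LinearMap.range C) fun v => hrange ⟨v, rfl⟩) C.surjective_rangeRestrict
  have hT' : ∀ v, C (T v) = B v := fun v => by
    have := congrArg Subtype.val (LinearMap.congr_fun hT v)
    simpa using this
  have hmap : LinearMap.ker C ≤ (LinearMap.ker C).comap T := fun v hv => by
    rw [Submodule.mem_comap, LinearMap.mem_ker, hT']
    exact hker hv
  have : Nontrivial (V ⧸ LinearMap.ker C) := Submodule.Quotient.nontrivial_iff.mpr hne
  obtain ⟨l, hl⟩ := Module.End.exists_eigenvalue ((LinearMap.ker C).mapQ (LinearMap.ker C) T hmap)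
  obtain ⟨q, hq⟩ := hl.exists_hasEigenvector
  obtain ⟨v, rfl⟩ := Submodule.mkQ_surjective _ q
  refine ⟨l, v, ?_, ?_⟩
  · intro h
    exact hq.2 ((Submodule.Quotient.mk_eq_zero _).mpr h)
  · have h := hq.apply_eq_smul
    rw [Submodule.mkQ_apply, Submodule.mapQ_apply, ← Submodule.Quotient.mk_smul,
      Submodule.Quotient.eq, LinearMap.mem_ker, map_sub, hT', map_smul, sub_eq_zero] at h
    exact h

/-- The rank two case. -/
lemma rank_two {k : Type*} [Field k] [IsAlgClosed k] (p : ℕ) [Fact p.Prime] [CharP k p]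
    {R : Type*} [CommRing R] [Algebra k R] (x y : R) (hx : x ^ p = 0) (hy : y ^ p = 0)
    {M : Type*} [AddCommGroup M] [Module R M] [Module k M] [IsScalarTower k R M]
    [FiniteDimensional k M] (hfx : ActsFreely p x M)
    (hf : ∀ c : k, ActsFreely p (y - c • x) M) (m : M)
    (hm : x ^ (p - 1) • y ^ (p - 1) • m = 0) : ∃ a b : M, m = x • a + y • b := by
  have hp : p - 1 + 1 = p := Nat.succ_pred_prime Fact.out
  have hxs : ∀ m : M, x • x ^ (p - 1) • m = 0 := fun m => by
    rw [← mul_smul, ← pow_succ', hp, hx, zero_smul]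
  have hys : ∀ m : M, y • y ^ (p - 1) • m = 0 := fun m => by
    rw [← mul_smul, ← pow_succ', hp, hy, zero_smul]
  have hxs' : ∀ m : M, x ^ (p - 1) • x • m = 0 := fun m => by rw [smul_comm, hxs]
  have hys' : ∀ m : M, y ^ (p - 1) • y • m = 0 := fun m => by rw [smul_comm, hys]
  -- multiplication maps
  let e : R → M →ₗ[k] M := fun r => (LinearMap.lsmul R M r).restrictScalars k
  have he : ∀ r m, e r m = r • m := fun r m => rfl
  let W0 : Submodule k (M × M) := LinearMap.range ((e x).prod (e y))
  have hW0 : ∀ a b : M, (a, b) ∈ W0 ↔ ∃ w : M, x • w = a ∧ y • w = b := fun a b => by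
    simp [W0, LinearMap.mem_range, he]
  let V : Submodule k M := LinearMap.ker (e (x ^ (p - 1)) ∘ₗ e (y ^ (p - 1)))
  have hV : ∀ m : M, m ∈ V ↔ x ^ (p - 1) • y ^ (p - 1) • m = 0 := fun m => by
    simp [V, LinearMap.mem_ker, he]
  let B : V →ₗ[k] (M × M) ⧸ W0 :=
    W0.mkQ ∘ₗ LinearMap.inl k M M ∘ₗ e (y ^ (p - 1)) ∘ₗ V.subtype
  let C : V →ₗ[k] (M × M) ⧸ W0 :=
    W0.mkQ ∘ₗ LinearMap.inr k M M ∘ₗ e (x ^ (p - 1)) ∘ₗ V.subtype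
  have hB : ∀ v : V, B v = W0.mkQ (y ^ (p - 1) • (v : M), 0) := fun v => rfl
  have hC : ∀ v : V, C v = W0.mkQ (0, x ^ (p - 1) • (v : M)) := fun v => rfl
  have hB0 : ∀ v : V, B v = 0 ↔ ∃ w : M, x • w = y ^ (p - 1) • (v : M) ∧ y • w = 0 := fun v => by
    rw [hB, Submodule.mkQ_apply, Submodule.Quotient.mk_eq_zero, hW0]
  have hC0 : ∀ v : V, C v = 0 ↔ ∃ w : M, x • w = 0 ∧ y • w = x ^ (p - 1) • (v : M) := fun v => by
    rw [hC, Submodule.mkQ_apply, Submodule.Quotient.mk_eq_zero, hW0]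
  have hC1 : ∀ v : V, C v = 0 → ∃ a b : M, (v : M) = x • a + y • b := by
    intro v hv
    obtain ⟨w, hw1, hw2⟩ := (hC0 v).mp hv
    obtain ⟨w', rfl⟩ := hfx.ker_le w hw1
    obtain ⟨a, ha⟩ := hfx ((v : M) - y • w') (by rw [smul_sub, ← hw2, smul_comm, sub_self])
    exact ⟨a, w', by rw [← ha]; abel⟩
  have hC2 : ∀ v : V, (∃ a b : M, (v : M) = x • a + y • b) → C v = 0 := by
    rintro v ⟨a, b, hab⟩
    refine (hC0 v).mpr ⟨x ^ (p - 1) • b, hxs b, ?_⟩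
    rw [hab, smul_add, hxs', zero_add, smul_comm]
  have hB2 : ∀ v : V, (∃ a b : M, (v : M) = x • a + y • b) → B v = 0 := by
    rintro v ⟨a, b, hab⟩
    refine (hB0 v).mpr ⟨y ^ (p - 1) • a, ?_, hys a⟩
    rw [hab, smul_add, hys', add_zero, smul_comm]
  have hker : LinearMap.ker C ≤ LinearMap.ker B := fun v hv => hB2 v (hC1 v hv)
  have hrange : LinearMap.range B ≤ LinearMap.range C := by
    rintro _ ⟨v, rfl⟩
    obtain ⟨w, hw⟩ := hfx (y ^ (p - 1) • (v : M)) ((hV _).mp v.2)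
    obtain ⟨m', hm'⟩ := hfx.ker_le (-(y • w)) (by
      rw [smul_neg, smul_comm, ← hw, hys, neg_zero])
    refine ⟨⟨m', (hV _).mpr ?_⟩, ?_⟩
    · rw [smul_comm, ← hm', smul_neg, hys', neg_zero]
    · rw [hB, hC, Submodule.mkQ_apply, Submodule.mkQ_apply, Submodule.Quotient.eq]
      simp only [Prod.mk_sub_mk]
      refine (hW0 _ _).mpr ⟨-w, ?_, ?_⟩
      · rw [hw]; simp
      · rw [← hm']; simp
  apply hC1 ⟨m, (hV m).mpr hm⟩
  by_contra hne
  obtain ⟨l, v, hv, hl⟩ := pencil_eigen B C hker hrange (fun h => hne (by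
    have : (⟨m, (hV m).mpr hm⟩ : V) ∈ LinearMap.ker C := h ▸ Submodule.mem_top
    exact this))
  apply hv
  apply hC2
  obtain ⟨c, hc⟩ := IsAlgClosed.exists_pow_nat_eq (-l) (Fact.out : p.Prime).pos
  obtain ⟨S, hS1, hS2⟩ := dade_identity k p (c • x) y
  have h1 : ∃ w : M, x • w = y ^ (p - 1) • (v : M) ∧ y • w = -(l • x ^ (p - 1) • (v : M)) := by
    rw [hB, hC, ← map_smul, Submodule.mkQ_apply, Submodule.mkQ_apply, Submodule.Quotient.eq] at hl
    obtain ⟨w, h1, h2⟩ := (hW0 _ _).mp hl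
    exact ⟨w, by simpa using h1, by simpa using h2⟩
  obtain ⟨w, hw1, hw2⟩ := h1
  set z := y - c • x with hz
  have g1 : x • (w + (c • S) • (v : M)) = z ^ (p - 1) • (v : M) := by
    rw [smul_add, hw1, hS1, add_smul, ← mul_smul]
    congr 2
    rw [mul_smul_comm, smul_mul_assoc]
  have g2 : y • (w + (c • S) • (v : M)) = (c • z ^ (p - 1)) • (v : M) := by
    rw [smul_add, hw2, hS2, smul_pow, smul_add, add_smul, ← smul_assoc l, ← mul_smul, ← neg_smul,
      ← add_smul]
    rw [smul_smul, ← pow_succ', hp, hc, mul_smul_comm]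
    rw [neg_smul, ← add_smul]
    ring_nf
  obtain ⟨w'', hw''⟩ := (hf c).ker_le (w + (c • S) • (v : M)) (by
    rw [sub_smul, g2, smul_assoc c x, g1, smul_assoc, sub_self])
  obtain ⟨b, hb⟩ := hf c ((v : M) - x • w'') (by
    rw [smul_sub, ← hz, ← g1, hw'', smul_comm, sub_self])
  refine ⟨w'' - c • b, b, ?_⟩
  have : (v : M) = x • w'' + (y - c • x) • b := by rw [← hb]; abel
  rw [this, sub_smul, smul_sub, smul_assoc, smul_comm x c b]
  abel

/-- The socle criterion. -/
lemma socle_criterion {k : Type*} [Field k] [IsAlgClosed k] (p : ℕ) [Fact p.Prime] [CharP k p]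
    {R : Type*} [CommRing R] [Algebra k R] (n : ℕ) (x : Fin n → R) (hx : ∀ i, x i ^ p = 0)
    {M : Type u} [AddCommGroup M] [Module R M] [Module k M] [IsScalarTower k R M]
    [FiniteDimensional k M] (hf : ∀ c : Fin n → k, c ≠ 0 → ActsFreely p (∑ i, c i • x i) M)
    (m : M) (hm : (∏ i, x i ^ (p - 1)) • m = 0) : ∃ w : Fin n → M, m = ∑ i, x i • w i := by
  induction n generalizing M with
  | zero => exact ⟨fun _ => 0, by simpa using hm⟩
  | succ n ih =>
    have hp : p - 1 + 1 = p := Nat.succ_pred_prime Fact.out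
    have hf0 : ActsFreely p (x 0) M := by
      have := hf (Pi.single 0 1) (by simp)
      simpa [Pi.single_apply] using this
    let P : Submodule R M := LinearMap.range (LinearMap.lsmul R M (x 0))
    have hP : ∀ m : M, m ∈ P ↔ ∃ a, x 0 • a = m := fun m => by
      simp [P, LinearMap.mem_range]
    have hfree : ∀ c : Fin n → k, c ≠ 0 → ActsFreely p (∑ i, c i • x i.succ) (M ⧸ P) := by
      intro c hc q hq
      obtain ⟨m, rfl⟩ := Submodule.mkQ_surjective _ q
      rw [← map_smul, Submodule.mkQ_apply, Submodule.Quotient.mk_eq_zero, hP] at hq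
      obtain ⟨a, ha⟩ := hq
      have hpow : (∑ i, c i • x i.succ) ^ p = 0 := by
        have h1 : (∑ i, c i • x i.succ) = aeval (fun i : Fin n => x i.succ)
            (∑ i, c i • (X i : MvPolynomial (Fin n) k)) := by simp
        rw [h1, ← map_pow, sum_pow_char]
        simp [smul_pow, hx]
      obtain ⟨a, b, hab⟩ := rank_two (k := k) p (x 0) (∑ i, c i • x i.succ) (hx 0) hpow hf0
        (fun d => by
          have := hf (Fin.cons (-d) c) (fun h => hc (by
            ext i
            have := congrFun h i.succ
            simpa using this))
          simpa [Fin.sum_univ_succ, sub_eq_neg_add] using this) m (by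
            rw [← ha, ← mul_smul, ← pow_succ, hp, hx, zero_smul])
      refine ⟨P.mkQ b, ?_⟩
      rw [← map_smul, Submodule.mkQ_apply, Submodule.mkQ_apply, Submodule.Quotient.eq, hP]
      exact ⟨a, by rw [hab]; abel⟩
    rw [Fin.prod_univ_succ, mul_smul] at hm
    obtain ⟨a, ha⟩ := hf0 _ hm
    obtain ⟨w, hw⟩ := ih (fun i => x i.succ) (fun i => hx _) hfree (P.mkQ m) (by
      rw [← map_smul, Submodule.mkQ_apply, Submodule.Quotient.mk_eq_zero, hP]
      exact ⟨a, ha.symm⟩)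
    choose w' hw' using fun i => Submodule.mkQ_surjective P (w i)
    have h2 : P.mkQ (m - ∑ i, x i.succ • w' i) = 0 := by
      rw [map_sub, hw, map_sum]
      simp only [map_smul, hw', sub_self]
    rw [Submodule.mkQ_apply, Submodule.Quotient.mk_eq_zero, hP] at h2
    obtain ⟨b, hb⟩ := h2
    refine ⟨Fin.cons b w', ?_⟩
    rw [Fin.sum_univ_succ]
    simp only [Fin.cons_zero, Fin.cons_succ, hb]
    abel

/-- A finite-dimensional module satisfying the socle criterion is projective. -/
lemma proj_of_socle {k R M : Type*} [Field k] [CommRing R] [Algebra k R]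
    [AddCommGroup M] [Module R M] [Module k M] [IsScalarTower k R M] [FiniteDimensional k M]
    (J : Ideal R) (hJ : J ≤ Ideal.jacobson ⊥) (s : R)
    (hsoc : ∀ (r : ℕ) (v : Fin r → R), v ≠ 0 →
      ∃ (b : R) (c : Fin r → k), c ≠ 0 ∧ ∀ j, b * v j = c j • s)
    (hM : ∀ m : M, s • m = 0 → m ∈ (J • ⊤ : Submodule R M)) : Module.Projective R M := by
  have hfin : Module.Finite R M := Module.Finite.of_restrictScalars_finite k R M
  let N : Submodule R M := J • ⊤
  let b := Module.finBasis k (M ⧸ N)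
  choose w hw using fun j => Submodule.mkQ_surjective N (b j)
  have hli : LinearIndependent R w := by
    rw [Fintype.linearIndependent_iff]
    intro g hg
    by_contra hne
    obtain ⟨a, c, hc, hac⟩ := hsoc _ g (fun h => hne fun i => congrFun h i)
    have h1 : s • ∑ j, c j • w j = 0 := by
      have : a • ∑ j, g j • w j = 0 := by rw [hg, smul_zero]
      rw [← this, Finset.smul_sum, Finset.smul_sum]
      refine Finset.sum_congr rfl fun j _ => ?_
      rw [smul_smul, hac, smul_assoc, smul_comm]
    have h2 : N.mkQ (∑ j, c j • w j) = 0 := (Submodule.Quotient.mk_eq_zero _).mpr (hM _ h1)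
    have h3 : ∑ j, c j • b j = 0 := by
      rw [← h2, map_sum]
      refine Finset.sum_congr rfl fun j _ => ?_
      rw [← hw]
      rfl
    exact hc (funext (Fintype.linearIndependent_iff.mp b.linearIndependent c h3))
  have hsp : ⊤ ≤ Submodule.span R (Set.range w) := by
    apply Submodule.le_of_le_smul_of_le_jacobson_bot Module.Finite.fg_top hJ
    intro m _
    have h1 : m - ∑ j, b.repr (N.mkQ m) j • w j ∈ N := by
      rw [← Submodule.Quotient.mk_eq_zero, ← Submodule.mkQ_apply, map_sub, sub_eq_zero, map_sum]
      conv_lhs => rw [← b.sum_repr (N.mkQ m)]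
      refine Finset.sum_congr rfl fun j _ => ?_
      rw [← hw]
      rfl
    have h2 : ∑ j, b.repr (N.mkQ m) j • w j ∈ Submodule.span R (Set.range w) :=
      Submodule.sum_mem _ fun j _ =>
        Submodule.smul_of_tower_mem _ _ (Submodule.subset_span ⟨j, rfl⟩)
    have := Submodule.add_mem_sup h2 h1
    rwa [add_sub_cancel] at this
  exact Module.Projective.of_basis (Module.Basis.mk hli hsp)

/-- Annihilator conditions pass from the ring to projective modules. -/
lemma proj_div {R M : Type*} [CommRing R] [AddCommGroup M] [Module R M]
    [hP : Module.Projective R M] (a t : R) (h : ∀ r : R, a * r = 0 → ∃ r', r = t * r')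
    (m : M) (hm : a • m = 0) : ∃ m' : M, m = t • m' := by
  obtain ⟨s, hs⟩ := hP.out
  have h1 : ∀ i, ∃ r', s m i = t * r' := fun i => h _ (by
    have : (a • s m) i = 0 := by rw [← map_smul, hm, map_zero]; rfl
    simpa using this)
  choose r hr using h1
  refine ⟨∑ i ∈ (s m).support, r i • i, ?_⟩
  conv_lhs => rw [← hs m]
  rw [Finsupp.linearCombination_apply, Finsupp.sum, Finset.smul_sum]
  refine Finset.sum_congr rfl fun i _ => ?_
  rw [hr, mul_smul]
  rfl

section TruncPoly

variable {k : Type u} [Field k]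

lemma trunc_div (p : ℕ) (hp : 1 ≤ p)
    (r : Polynomial k ⧸ Ideal.span {(Polynomial.X : Polynomial k) ^ p})
    (hr : (Ideal.Quotient.mk _ Polynomial.X) ^ (p - 1) * r = 0) :
    ∃ r', r = (Ideal.Quotient.mk _ Polynomial.X) * r' := by
  obtain ⟨f, rfl⟩ := Ideal.Quotient.mk_surjective r
  rw [← map_pow, ← map_mul, Ideal.Quotient.eq_zero_iff_mem, Ideal.mem_span_singleton] at hr
  have hX : (Polynomial.X : Polynomial k) ∣ f := by
    rw [Polynomial.X_dvd_iff]
    have := Polynomial.X_pow_dvd_iff.mp hr (p - 1) (by omega)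
    simpa [Polynomial.coeff_X_pow_mul'] using this
  obtain ⟨g, rfl⟩ := hX
  exact ⟨Ideal.Quotient.mk _ g, map_mul _ _ _⟩

lemma trunc_soc (p : ℕ) (hp : 1 ≤ p) (r : ℕ)
    (v : Fin r → Polynomial k ⧸ Ideal.span {(Polynomial.X : Polynomial k) ^ p}) (hv : v ≠ 0) :
    ∃ (b : Polynomial k ⧸ Ideal.span {(Polynomial.X : Polynomial k) ^ p}) (c : Fin r → k),
      c ≠ 0 ∧ ∀ j, b * v j = c j • (Ideal.Quotient.mk _ Polynomial.X) ^ (p - 1) := by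
  classical
  choose f hf using fun j => Ideal.Quotient.mk_surjective (v j)
  have hex : ∃ d, d < p ∧ ∃ j, (f j).coeff d ≠ 0 := by
    by_contra hcon
    push Not at hcon
    apply hv
    ext j
    rw [← hf, Pi.zero_apply, Ideal.Quotient.eq_zero_iff_mem, Ideal.mem_span_singleton,
      Polynomial.X_pow_dvd_iff]
    exact fun d hd => hcon d hd j
  obtain ⟨hd, j0, hj0⟩ := Nat.find_spec hex
  have hmin := fun e => Nat.find_min hex (m := e)
  set d := Nat.find hex
  refine ⟨Ideal.Quotient.mk _ (Polynomial.X ^ (p - 1 - d)), fun j => (f j).coeff d,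
    fun h => hj0 (congrFun h j0), fun j => ?_⟩
  have : (f j).coeff d • (Ideal.Quotient.mk
      (Ideal.span {(Polynomial.X : Polynomial k) ^ p}) Polynomial.X) ^ (p - 1)
      = Ideal.Quotient.mk _ ((f j).coeff d • Polynomial.X ^ (p - 1)) := by
    rw [← map_pow]; rfl
  rw [this, ← hf, ← map_mul, Ideal.Quotient.eq, Ideal.mem_span_singleton, Polynomial.X_pow_dvd_iff]
  intro e he
  rw [Polynomial.coeff_sub, Polynomial.coeff_X_pow_mul', Polynomial.coeff_smul,
    Polynomial.coeff_X_pow]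
  by_cases h1 : e = p - 1
  · subst h1
    rw [if_pos (by omega), if_pos rfl, show p - 1 - (p - 1 - d) = d by omega]
    simp
  · rw [if_neg h1]
    split_ifs with h2
    · have := hmin (e - (p - 1 - d)) (by omega)
      push Not at this
      rw [this (by omega) j]
      simp
    · simp

/-- Projectivity over `k[t]/(t^p)` of a finite-dimensional module. -/
lemma trunc_proj_iff (p : ℕ) (hp : 1 ≤ p) {M : Type*} [AddCommGroup M]
    [Module (Polynomial k ⧸ Ideal.span {(Polynomial.X : Polynomial k) ^ p}) M] [Module k M]
    [IsScalarTower k (Polynomial k ⧸ Ideal.span {(Polynomial.X : Polynomial k) ^ p}) M]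
    [FiniteDimensional k M] :
    Module.Projective (Polynomial k ⧸ Ideal.span {(Polynomial.X : Polynomial k) ^ p}) M ↔
      ActsFreely p (Ideal.Quotient.mk (Ideal.span {(Polynomial.X : Polynomial k) ^ p})
        Polynomial.X) M := by
  constructor
  · intro h m hm
    exact proj_div _ _ (trunc_div p hp) m hm
  · intro h
    refine proj_of_socle (k := k) (Ideal.span {Ideal.Quotient.mk _ Polynomial.X}) ?_
      ((Ideal.Quotient.mk _ Polynomial.X) ^ (p - 1)) (trunc_soc p hp) ?_
    · rw [Ideal.span_singleton_le_iff_mem]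
      apply Ideal.radical_le_jacobson
      refine mem_nilradical.mpr ⟨p, ?_⟩
      rw [← map_pow, Ideal.Quotient.eq_zero_iff_mem]
      exact Ideal.mem_span_singleton_self _
    · intro m hm
      obtain ⟨m', rfl⟩ := h m hm
      exact Submodule.smul_mem_smul (Ideal.mem_span_singleton_self _) trivial

end TruncPoly

section DadeAlg

variable {k : Type u} [Field k]

/-- The defining ideal of the Dade algebra. -/
noncomputable abbrev dadeIdeal (k : Type u) [CommRing k] (p n : ℕ) : Ideal (MvPolynomial (Fin n) k) :=
  Ideal.span (Set.range fun i : Fin n => (MvPolynomial.X i : MvPolynomial (Fin n) k) ^ p)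

lemma mem_dadeIdeal {p n : ℕ} (f : MvPolynomial (Fin n) k) :
    f ∈ dadeIdeal k p n ↔ ∀ e ∈ f.support, ∃ i, p ≤ e i := by
  have h := @mem_ideal_span_monomial_image (Fin n) k _ f
    (Set.range fun i : Fin n => Finsupp.single i p)
  rw [← Set.range_comp] at h
  have e1 : ((fun s => monomial s (1 : k)) ∘ fun i : Fin n => Finsupp.single i p) =
      fun i : Fin n => (MvPolynomial.X i : MvPolynomial (Fin n) k) ^ p := by
    ext1 i
    simp [X_pow_eq_monomial]
  rw [e1] at h
  rw [h]
  simp [Finsupp.single_le_iff]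

lemma dade_soc (p n : ℕ) (hp : 1 ≤ p) (r : ℕ) (v : Fin r → DadeAlgebra k p n) (hv : v ≠ 0) :
    ∃ (b : DadeAlgebra k p n) (c : Fin r → k),
      c ≠ 0 ∧ ∀ j, b * v j = c j • ∏ i, xbar k p n i ^ (p - 1) := by
  classical
  choose f hf using fun j => Ideal.Quotient.mk_surjective (v j)
  have hex : ∃ N : ℕ, ∃ d : Fin n →₀ ℕ, d.degree = N ∧ (∀ i, d i < p) ∧
      ∃ j, coeff d (f j) ≠ 0 := by
    by_contra hcon
    push Not at hcon
    apply hv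
    ext j
    rw [← hf, Pi.zero_apply, Ideal.Quotient.eq_zero_iff_mem]
    refine (mem_dadeIdeal _).mpr fun e he => ?_
    by_contra hlt
    push Not at hlt
    exact (mem_support_iff.mp he) (hcon _ e rfl hlt j)
  obtain ⟨d, hdeg, hd, j0, hj0⟩ := Nat.find_spec hex
  have hmin := fun e => Nat.find_min hex (m := e)
  rw [← hdeg] at hmin
  let D : Fin n →₀ ℕ := Finsupp.equivFunOnFinite.symm fun _ => p - 1
  have hD : ∀ i, D i = p - 1 := fun i => rfl
  have hs : ∏ i, xbar k p n i ^ (p - 1) = Ideal.Quotient.mk (dadeIdeal k p n) (monomial D 1) := by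
    have : (monomial D (1 : k)) = ∏ i : Fin n, X i ^ (p - 1) := by
      rw [monomial_eq, Finsupp.prod_fintype _ _ (by simp)]
      simp [hD]
    rw [this, map_prod]
    rfl
  refine ⟨Ideal.Quotient.mk _ (monomial (D - d) 1), fun j => coeff d (f j),
    fun h => hj0 (congrFun h j0), fun j => ?_⟩
  have : coeff d (f j) • Ideal.Quotient.mk (dadeIdeal k p n) (monomial D 1)
      = Ideal.Quotient.mk (dadeIdeal k p n) (coeff d (f j) • monomial D 1) := rfl
  rw [hs, this, ← hf, ← map_mul, Ideal.Quotient.eq]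
  refine (mem_dadeIdeal _).mpr fun e he => ?_
  by_contra hlt
  push Not at hlt
  refine mem_support_iff.mp he ?_
  rw [coeff_sub, coeff_monomial_mul', coeff_smul, coeff_monomial]
  by_cases h1 : D = e
  · subst h1
    rw [if_pos tsub_le_self, if_pos rfl]
    have : D - (D - d) = d := by
      ext i
      have := hd i
      simp only [Finsupp.tsub_apply, hD]
      omega
    rw [this]
    simp
  · rw [if_neg h1]
    split_ifs with h2
    · have hlt' : e - (D - d) < d := by
        refine lt_of_le_of_ne (fun i => ?_) (fun h => h1 ?_)
        · have := hd i
          have := hlt i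
          simp only [Finsupp.tsub_apply, hD]
          omega
        · ext i
          have a1 := DFunLike.congr_fun h i
          have a2 := h2 i
          have := hd i
          have := hlt i
          simp only [Finsupp.tsub_apply, hD] at a1 a2 ⊢
          omega
      have hdlt : (e - (D - d)).degree < d.degree := by
        rw [Finsupp.degree_eq_sum, Finsupp.degree_eq_sum]
        obtain ⟨hle, i, hi⟩ := Pi.lt_def.mp (show ⇑(e - (D - d)) < ⇑d from hlt')
        exact Finset.sum_lt_sum (fun i _ => hle i) ⟨i, Finset.mem_univ i, hi⟩
      have := hmin _ hdlt
      push Not at this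
      rw [this _ rfl (fun i => lt_of_le_of_lt (hlt'.le i) (hd i)) j]
      simp
    · simp

/-- The monomial case of divisibility. -/
lemma dade_div_X (p n : ℕ) (hp : 1 ≤ p) (i0 : Fin n) (g : MvPolynomial (Fin n) k)
    (hg : X i0 ^ (p - 1) * g ∈ dadeIdeal k p n) :
    g ∈ Ideal.span {X i0} ⊔ dadeIdeal k p n := by
  rw [g.as_sum]
  refine Ideal.sum_mem _ fun e he => ?_
  by_cases h0 : e i0 = 0
  · apply Ideal.mem_sup_right
    have h1 : Finsupp.single i0 (p - 1) + e ∈ (X i0 ^ (p - 1) * g).support := by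
      rw [mem_support_iff, X_pow_eq_monomial, coeff_monomial_mul, one_mul]
      exact mem_support_iff.mp he
    obtain ⟨i, hi⟩ := (mem_dadeIdeal _).mp hg _ h1
    refine (mem_dadeIdeal _).mpr fun e' he' => ?_
    have : e' = e := by
      have := support_monomial_subset he'
      simpa using this
    subst this
    refine ⟨i, ?_⟩
    rw [Finsupp.add_apply] at hi
    by_cases hi0 : i0 = i
    · subst hi0
      rw [Finsupp.single_eq_same, h0] at hi
      omega
    · rw [Finsupp.single_eq_of_ne (Ne.symm hi0)] at hi
      omega
  · apply Ideal.mem_sup_left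
    rw [Ideal.mem_span_singleton]
    rw [X_dvd_monomial]
    exact Or.inr h0

lemma dade_div (p n : ℕ) [Fact p.Prime] [CharP k p] (c : Fin n → k) (hc : c ≠ 0)
    (r : DadeAlgebra k p n) (hr : (∑ i, c i • xbar k p n i) ^ (p - 1) * r = 0) :
    ∃ r', r = (∑ i, c i • xbar k p n i) * r' := by
  classical
  have hp : 1 ≤ p := (Fact.out : p.Prime).one_le
  obtain ⟨i0, hi0⟩ := Function.ne_iff.mp hc
  rw [Pi.zero_apply] at hi0
  let U : MvPolynomial (Fin n) k := ∑ i, c i • X i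
  have hU : ∑ i, c i • xbar k p n i = Ideal.Quotient.mk (dadeIdeal k p n) U := by
    simp only [U, map_sum]
    rfl
  rw [hU] at hr ⊢
  obtain ⟨f, rfl⟩ := Ideal.Quotient.mk_surjective r
  rw [← map_pow, ← map_mul, Ideal.Quotient.eq_zero_iff_mem] at hr
  let E : MvPolynomial (Fin n) k := ∑ i ∈ Finset.univ.erase i0, c i • X i
  have hUE : U = c i0 • X i0 + E := by
    simp only [U, E]
    rw [Finset.add_sum_erase _ (fun i => c i • (X i : MvPolynomial (Fin n) k)) (Finset.mem_univ i0)]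
  let φ : MvPolynomial (Fin n) k →ₐ[k] MvPolynomial (Fin n) k :=
    aeval (Function.update X i0 U)
  let ψ : MvPolynomial (Fin n) k →ₐ[k] MvPolynomial (Fin n) k :=
    aeval (Function.update X i0 ((c i0)⁻¹ • (X i0 - E)))
  have hφ0 : φ (X i0) = U := by simp [φ]
  have hφ1 : ∀ i, i ≠ i0 → φ (X i) = X i := fun i hi => by simp [φ, hi]
  have hψ0 : ψ (X i0) = (c i0)⁻¹ • (X i0 - E) := by simp [ψ]
  have hψ1 : ∀ i, i ≠ i0 → ψ (X i) = X i := fun i hi => by simp [ψ, hi]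
  have hφE : φ E = E := by
    simp only [E, map_sum, map_smul]
    exact Finset.sum_congr rfl fun i hi => by rw [hφ1 i (Finset.ne_of_mem_erase hi)]
  have hψE : ψ E = E := by
    simp only [E, map_sum, map_smul]
    exact Finset.sum_congr rfl fun i hi => by rw [hψ1 i (Finset.ne_of_mem_erase hi)]
  have hψU : ψ U = X i0 := by
    rw [hUE, map_add, map_smul, hψ0, hψE, smul_smul, mul_inv_cancel₀ hi0, one_smul, sub_add_cancel]
  have hφψ : ∀ g, φ (ψ g) = g := by
    intro g
    have : φ.comp ψ = AlgHom.id k _ := by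
      apply MvPolynomial.algHom_ext
      intro i
      by_cases hi : i = i0
      · subst hi
        rw [AlgHom.comp_apply, hψ0, map_smul, map_sub, hφ0, hφE, hUE, add_sub_cancel_right,
          smul_smul, inv_mul_cancel₀ hi0, one_smul]
        rfl
      · rw [AlgHom.comp_apply, hψ1 i hi, hφ1 i hi]
        rfl
    exact DFunLike.congr_fun this g
  have hX : ∀ i, (X i : MvPolynomial (Fin n) k) ^ p ∈ dadeIdeal k p n := fun i =>
    Ideal.subset_span ⟨i, rfl⟩
  have hEp : E ^ p ∈ dadeIdeal k p n := by
    simp only [E]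
    rw [sum_pow_char]
    refine Ideal.sum_mem _ fun i _ => ?_
    rw [smul_pow]
    exact Submodule.smul_of_tower_mem _ _ (hX i)
  have hUp : U ^ p ∈ dadeIdeal k p n := by
    rw [hUE, add_pow_char, smul_pow]
    exact Ideal.add_mem _ (Submodule.smul_of_tower_mem _ _ (hX i0)) hEp
  have hφI : ∀ g ∈ dadeIdeal k p n, φ g ∈ dadeIdeal k p n := by
    intro g hg
    have : dadeIdeal k p n ≤ (dadeIdeal k p n).comap φ.toRingHom := by
      rw [dadeIdeal, Ideal.span_le]
      rintro _ ⟨i, rfl⟩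
      change φ (X i ^ p) ∈ dadeIdeal k p n
      rw [map_pow]
      by_cases hi : i = i0
      · rw [hi, hφ0]; exact hUp
      · rw [hφ1 i hi]; exact hX i
    exact this hg
  have hψI : ∀ g ∈ dadeIdeal k p n, ψ g ∈ dadeIdeal k p n := by
    intro g hg
    have : dadeIdeal k p n ≤ (dadeIdeal k p n).comap ψ.toRingHom := by
      rw [dadeIdeal, Ideal.span_le]
      rintro _ ⟨i, rfl⟩
      change ψ (X i ^ p) ∈ dadeIdeal k p n
      rw [map_pow]
      by_cases hi : i = i0
      · rw [hi, hψ0, smul_pow, sub_pow_char]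
        exact Submodule.smul_of_tower_mem _ _ (Ideal.sub_mem _ (hX i0) hEp)
      · rw [hψ1 i hi]; exact hX i
    exact this hg
  have h1 := hψI _ hr
  rw [map_mul, map_pow, hψU] at h1
  obtain ⟨a, ha, b, hb, hab⟩ := Submodule.mem_sup.mp (dade_div_X p n hp i0 _ h1)
  obtain ⟨a', rfl⟩ := Ideal.mem_span_singleton.mp ha
  refine ⟨Ideal.Quotient.mk _ (φ a'), ?_⟩
  rw [← map_mul, Ideal.Quotient.eq, ← hφψ f, ← hab, map_add, map_mul, hφ0, add_sub_cancel_left]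
  exact hφI _ hb

end DadeAlg

/-- **Dade's Lemma, finite-dimensional case** (the case `G = 𝔾ₐ₍₁₎^{×n}` of Proposition 1
of the paper): a finite-dimensional module `M` over `A = k[X₁,…,Xₙ]/(X₁^p,…,Xₙ^p)`, `k`
algebraically closed of characteristic `p`, is projective iff for every tuple
`c ∈ kⁿ`, not all coordinates zero, `M` is projective over `k[t]/(t^p)`, with `t` acting
through the `k`-algebra map `k[t]/(t^p) → A` sending `t` to `u = c₁x₁ + ⋯ + cₙxₙ`. -/
theorem stmt7 (p : ℕ) [Fact p.Prime] (k : Type u) [Field k] [IsAlgClosed k] [CharP k p]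
    (n : ℕ) (hn : 1 ≤ n)
    (M : Type u) [AddCommGroup M] [Module (DadeAlgebra k p n) M]
    [Module k M] [IsScalarTower k (DadeAlgebra k p n) M] [FiniteDimensional k M] :
    Module.Projective (DadeAlgebra k p n) M ↔
      ∀ c : Fin n → k, c ≠ 0 →
        @Module.Projective (Polynomial k ⧸ Ideal.span {(Polynomial.X : Polynomial k) ^ p}) _
          M _ (Module.compHom M (dadeHom k p n c).toRingHom) := by
  have hp : 1 ≤ p := (Fact.out : p.Prime).one_le
  have key : ∀ c : Fin n → k,
      @Module.Projective (Polynomial k ⧸ Ideal.span {(Polynomial.X : Polynomial k) ^ p}) _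
          M _ (Module.compHom M (dadeHom k p n c).toRingHom) ↔
        ActsFreely p (∑ i, c i • xbar k p n i) M := by
    intro c
    letI inst := Module.compHom M (dadeHom k p n c).toRingHom
    have hsm : ∀ (r : Polynomial k ⧸ Ideal.span {(Polynomial.X : Polynomial k) ^ p}) (m : M),
        r • m = dadeHom k p n c r • m := fun r m => rfl
    haveI : IsScalarTower k (Polynomial k ⧸ Ideal.span {(Polynomial.X : Polynomial k) ^ p}) M :=
      ⟨fun a r m => by rw [hsm, hsm, map_smul, smul_assoc]⟩
    have hX : dadeHom k p n c (Ideal.Quotient.mk _ Polynomial.X) = ∑ i, c i • xbar k p n i := by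
      change Polynomial.aeval _ Polynomial.X = _
      rw [Polynomial.aeval_X]
    rw [trunc_proj_iff p hp]
    simp only [ActsFreely, hsm, map_pow, hX]
  simp only [key]
  constructor
  · intro hproj c hc m hm
    exact proj_div _ _ (dade_div p n c hc) m hm
  · intro hf
    refine proj_of_socle (k := k) (Ideal.span (Set.range (xbar k p n))) ?_
      (∏ i, xbar k p n i ^ (p - 1)) (dade_soc p n hp) ?_
    · rw [Ideal.span_le]
      rintro _ ⟨i, rfl⟩
      apply Ideal.radical_le_jacobson
      exact mem_nilradical.mpr ⟨p, xbar_pow_eq_zero k p n i⟩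
    · intro m hm
      obtain ⟨w, rfl⟩ := socle_criterion (k := k) p n (xbar k p n) (xbar_pow_eq_zero k p n) hf m hm
      exact Submodule.sum_mem _ fun i _ =>
        Submodule.smul_mem_smul (Ideal.subset_span ⟨i, rfl⟩) trivial
end

section
/- Let p be a prime, k a field of characteristic p, G a finite p-group, and M a k-linear representation of G (not necessarily finite-dimensional). Then M is projective as a module over the group algebra k[G] if and only if the group cohomology H¹(G, M) vanishes. -/
open MonoidAlgebra in
/-- Higman's criterion, sufficiency. -/
lemma higman_projective {k G P : Type} [Field k] [Group G] [Fintype G]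
    [AddCommGroup P] [Module k P] [Module (MonoidAlgebra k G) P]
    [IsScalarTower k (MonoidAlgebra k G) P] (θ : P →ₗ[k] P)
    (h : ∀ v : P, ∑ g : G, single g⁻¹ (1 : k) • θ (single g (1 : k) • v) = v) :
    Module.Projective (MonoidAlgebra k G) P := by
  refine Module.Projective.of_lifting_property'' fun f hf => ?_
  obtain ⟨σ, hσ⟩ := (f.restrictScalars k).exists_rightInverse_of_surjective
    (LinearMap.range_eq_top.2 hf)
  refine ⟨(σ ∘ₗ θ).sumOfConjugatesEquivariant G, ?_⟩
  ext v
  have hσ' : ∀ x, f (σ x) = x := fun x => LinearMap.congr_fun hσ x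
  rw [LinearMap.comp_apply, LinearMap.sumOfConjugatesEquivariant_apply, map_sum]
  simp only [LinearMap.conjugate_apply, map_smul, LinearMap.comp_apply, hσ', h, LinearMap.id_apply]

open MonoidAlgebra in
/-- Higman's criterion, necessity. -/
lemma higman_exists {k G P : Type} [Field k] [Group G] [Fintype G]
    [AddCommGroup P] [Module k P] [Module (MonoidAlgebra k G) P]
    [IsScalarTower k (MonoidAlgebra k G) P] (hP : Module.Projective (MonoidAlgebra k G) P) :
    ∃ θ : P →ₗ[k] P,
      ∀ v : P, ∑ g : G, single g⁻¹ (1 : k) • θ (single g (1 : k) • v) = v := by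
  obtain ⟨s, hs⟩ := hP.out
  let c : MonoidAlgebra k G →ₗ[k] k :=
    { toFun := fun a => a.coeff 1
      map_add' := by intros; simp
      map_smul' := by intros; simp }
  let τ : (P →₀ MonoidAlgebra k G) →ₗ[k] P := Finsupp.lsum k fun m => c.smulRight m
  have key : ∀ x : P →₀ MonoidAlgebra k G,
      ∑ g : G, single g⁻¹ (1 : k) • τ (single g (1 : k) • x) =
        Finsupp.linearCombination (MonoidAlgebra k G) id x := by
    intro x
    induction x using Finsupp.induction_linear with
    | zero => simp
    | add x y hx hy => simp only [smul_add, map_add, Finset.sum_add_distrib, hx, hy]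
    | single m a =>
      have h1 : ∀ g : G, single g⁻¹ (1 : k) • τ (single g (1 : k) • Finsupp.single m a) =
          single g⁻¹ (a.coeff g⁻¹) • m := by
        intro g
        have : τ (single g (1 : k) • Finsupp.single m a) = a.coeff g⁻¹ • m := by
          have hc : ∀ b : MonoidAlgebra k G, τ (Finsupp.single m b) = b.coeff 1 • m := by
            intro b
            simp only [τ, Finsupp.lsum_single]
            rfl
          rw [Finsupp.smul_single, hc, smul_eq_mul, coeff_single_mul_apply]
          simp
        rw [this, ← algebraMap_smul (MonoidAlgebra k G) (a.coeff g⁻¹) m, smul_smul]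
        simp [MonoidAlgebra.single_mul_single]
      simp only [h1, Finsupp.linearCombination_single, id]
      rw [← Finset.sum_smul]
      congr 1
      refine (Equiv.sum_comp (Equiv.inv G) (fun g => single g (a.coeff g))).trans ?_
      ext h
      classical
      simp [Finsupp.single_apply]
  refine ⟨τ ∘ₗ s.restrictScalars k, fun v => ?_⟩
  simp only [LinearMap.comp_apply, LinearMap.restrictScalars_apply, map_smul, key]
  exact hs v

lemma exists_invariant_ne_zero_aux {p : ℕ} [Fact p.Prime] {k G Q : Type} [Field k]
    [Group G] [Finite G] (hG : IsPGroup p G) [AddCommGroup Q] [Module k Q] [Module (ZMod p) Q]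
    (hpQ : ∀ x : Q, p • x = 0)
    (ρ : Representation k G Q) (q : Q) (hq : q ≠ 0) : ∃ x : Q, x ≠ 0 ∧ ∀ g, ρ g x = x := by
  let S : Submodule (ZMod p) Q := Submodule.span (ZMod p) (Set.range fun g => ρ g q)
  have hfin := Module.Finite.span_of_finite (ZMod p) (Set.finite_range fun g => ρ g q)
  have : Finite S := Module.finite_of_finite (ZMod p)
  have hS : ∀ g : G, ∀ x ∈ S, ρ g x ∈ S := by
    intro g x hx
    induction hx using Submodule.span_induction with
    | mem x hx =>
      obtain ⟨h, rfl⟩ := hx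
      refine Submodule.subset_span ⟨g * h, ?_⟩
      simp
    | zero => simp
    | add x y _ _ hx hy => rw [map_add]; exact S.add_mem hx hy
    | smul a x _ hx =>
      have := ZMod.map_smul (ρ g).toAddMonoidHom a x
      simp only [LinearMap.toAddMonoidHom_coe] at this
      rw [this]
      exact S.smul_mem _ hx
  letI : MulAction G S :=
    { smul := fun g x => ⟨ρ g x, hS g x x.2⟩
      one_smul := fun x => Subtype.ext (by change ρ 1 (x : Q) = x; simp)
      mul_smul := fun g h x => Subtype.ext (by
        change ρ (g * h) (x : Q) = ρ g (ρ h x); simp) }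
  have hqS : q ∈ S := Submodule.subset_span ⟨1, by simp⟩
  have hdvd : p ∣ Nat.card S := by
    have h1 : addOrderOf (⟨q, hqS⟩ : S) = p :=
      addOrderOf_eq_prime (Subtype.ext (by simpa using hpQ q))
        (fun h => hq (congrArg Subtype.val h))
    exact h1.symm.dvd.trans (addOrderOf_dvd_natCard _)
  have h0 : (0 : S) ∈ MulAction.fixedPoints G S := fun g =>
    Subtype.ext (by change ρ g ((0 : S) : Q) = ((0 : S) : Q); simp)
  obtain ⟨b, hb, hne⟩ :=
    hG.exists_fixed_point_of_prime_dvd_card_of_fixed_point S hdvd h0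
  exact ⟨b, fun h => hne (Subtype.ext h.symm), fun g => congrArg Subtype.val (hb g)⟩

/-- A nonzero representation of a `p`-group in characteristic `p` has a nonzero invariant. -/
lemma exists_invariant_ne_zero {p : ℕ} (hp : p.Prime) {k G Q : Type} [Field k] [CharP k p]
    [Group G] [Finite G] (hG : IsPGroup p G) [AddCommGroup Q] [Module k Q]
    (ρ : Representation k G Q) (q : Q) (hq : q ≠ 0) : ∃ x : Q, x ≠ 0 ∧ ∀ g, ρ g x = x := by
  have : Fact p.Prime := ⟨hp⟩
  have hpQ : ∀ x : Q, p • x = 0 := fun x => by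
    rw [← Nat.cast_smul_eq_nsmul k, CharP.cast_eq_zero, zero_smul]
  let _ : Module (ZMod p) Q := AddCommGroup.zmodModule hpQ
  exact exists_invariant_ne_zero_aux hG hpQ ρ q hq

lemma subsingleton_H1_iff {k G V : Type} [Field k] [Group G] [AddCommGroup V] [Module k V]
    (ρ : Representation k G V) :
    Subsingleton (groupCohomology (Rep.of ρ) 1) ↔
      ∀ f : G → V, (∀ g h, f (g * h) = ρ g (f h) + f g) → ∃ v, ∀ g, f g = ρ g v - v := by
  constructor
  · intro hs f hf
    let x : groupCohomology.cocycles₁ (Rep.of ρ) :=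
      ⟨f, (groupCohomology.mem_cocycles₁_iff (A := Rep.of ρ) f).2 hf⟩
    obtain ⟨v, hv⟩ := (groupCohomology.H1π_eq_zero_iff x).1 (Subsingleton.elim _ _)
    exact ⟨v, fun g => (congrFun hv g).symm⟩
  · intro h
    refine subsingleton_of_forall_eq 0 fun y => ?_
    induction y using groupCohomology.H1_induction_on with
    | h x =>
      obtain ⟨v, hv⟩ := h x ((groupCohomology.mem_cocycles₁_iff (A := Rep.of ρ) x).1 x.2)
      exact (groupCohomology.H1π_eq_zero_iff x).2 ⟨v, funext fun g => (hv g).symm⟩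

/-- The right regular representation on functions. -/
def funRep (k G W : Type) [Field k] [Group G] [AddCommGroup W] [Module k W] :
    Representation k G (G → W) where
  toFun g := LinearMap.funLeft k W (fun h => h * g)
  map_one' := by ext; simp [LinearMap.funLeft]
  map_mul' a b := by ext; simp [LinearMap.funLeft, mul_assoc]

lemma exists_theta {p : ℕ} (hp : p.Prime) {k G V : Type} [Field k] [CharP k p]
    [Group G] [Fintype G] (hG : IsPGroup p G) [AddCommGroup V] [Module k V]
    (ρ : Representation k G V)
    (H : ∀ f : G → V, (∀ g h, f (g * h) = ρ g (f h) + f g) → ∃ v, ∀ g, f g = ρ g v - v) :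
    ∃ θ : V →ₗ[k] V, ∀ v, ∑ g : G, ρ g⁻¹ (θ (ρ g v)) = v := by
  classical
  let W := ρ.invariants
  obtain ⟨φ, hφ⟩ := W.subtype.exists_leftInverse_of_injective W.ker_subtype
  have hφ' : ∀ w : W, φ w = w := fun w => LinearMap.congr_fun hφ w
  let F := funRep k G W
  have hF : ∀ g x h, F g x h = x (h * g) := fun _ _ _ => rfl
  let Φ : V →ₗ[k] (G → W) := LinearMap.pi fun g => φ ∘ₗ ρ g
  have hΦ : ∀ v g, Φ v g = φ (ρ g v) := fun _ _ => rfl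
  have hcomm : ∀ g v, Φ (ρ g v) = F g (Φ v) := by
    intro g v; ext1 h; rw [hF, hΦ, hΦ]; simp
  have hinj : Function.Injective Φ := by
    rw [← LinearMap.ker_eq_bot, eq_bot_iff]
    intro v hv
    by_contra hv0
    have hK : ∀ g, ∀ x ∈ LinearMap.ker Φ, ρ g x ∈ LinearMap.ker Φ := by
      intro g x hx
      rw [LinearMap.mem_ker] at hx ⊢
      rw [hcomm, hx, map_zero]
    let ρK : Representation k G (LinearMap.ker Φ) :=
      { toFun := fun g => (ρ g).restrict (hK g)
        map_one' := by ext; simp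
        map_mul' := by intros; ext; simp }
    obtain ⟨x, hx0, hx⟩ := exists_invariant_ne_zero hp hG ρK ⟨v, hv⟩
      (fun h => hv0 (by simpa using congrArg Subtype.val h))
    have hxi : (x : V) ∈ W := fun g => congrArg Subtype.val (hx g)
    have h1 : Φ x 1 = 0 := congrFun (LinearMap.mem_ker.1 x.2) 1
    rw [hΦ, map_one, Module.End.one_apply] at h1
    have h2 := hφ' ⟨x, hxi⟩
    rw [h1] at h2
    exact hx0 (Subtype.ext (congrArg Subtype.val h2).symm)
  have hsurj : Function.Surjective Φ := by
    rw [← LinearMap.range_eq_top]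
    by_contra hne
    obtain ⟨y, hy⟩ : ∃ y, y ∉ LinearMap.range Φ := by
      by_contra! hc
      exact hne (eq_top_iff.2 fun y _ => hc y)
    have hst : ∀ g, LinearMap.range Φ ≤ (LinearMap.range Φ).comap (F g) := by
      rintro g _ ⟨v, rfl⟩
      exact ⟨ρ g v, hcomm g v⟩
    obtain ⟨q, hq0, hq⟩ := exists_invariant_ne_zero hp hG (F.quotient _ hst)
      (Submodule.Quotient.mk y) (by rwa [Ne, Submodule.Quotient.mk_eq_zero])
    obtain ⟨x, rfl⟩ := Submodule.Quotient.mk_surjective _ q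
    rw [Ne, Submodule.Quotient.mk_eq_zero] at hq0
    have hx : ∀ g, ∃ v, Φ v = F g x - x := fun g =>
      (Submodule.Quotient.eq _).1 (hq g)
    choose f hf using hx
    obtain ⟨v, hv⟩ := H f (fun g h => hinj (by
      rw [map_add, hcomm, hf, hf, hf, map_sub, map_mul, Module.End.mul_apply]; abel))
    -- `x - Φ v` is invariant, hence constant
    have hinv : ∀ g, F g (x - Φ v) = x - Φ v := by
      intro g
      have := hf g
      rw [hv, map_sub, hcomm] at this
      rw [map_sub, sub_eq_sub_iff_sub_eq_sub, ← this]
    let c : W := (x - Φ v) 1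
    have hc : x - Φ v = Φ c := by
      ext1 g
      have h1 := congrFun (hinv g) 1
      rw [hF, one_mul] at h1
      rw [h1, hΦ, c.2 g, hφ']
    exact hq0 ⟨c + v, by rw [map_add, ← hc]; abel⟩
  let e : V ≃ₗ[k] (G → W) := LinearEquiv.ofBijective Φ ⟨hinj, hsurj⟩
  have he : ∀ x, Φ (e.symm x) = x := fun x => e.apply_symm_apply x
  refine ⟨e.symm.toLinearMap ∘ₗ LinearMap.single k (fun _ : G => W) 1 ∘ₗ φ, fun v => hinj ?_⟩
  ext1 h
  rw [map_sum, Finset.sum_apply, Finset.sum_eq_single h]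
  · rw [hcomm, hF]
    simp only [LinearMap.comp_apply, LinearEquiv.coe_coe, he, LinearMap.single_apply, mul_inv_cancel,
      Pi.single_eq_same]
    rw [hΦ]
  · intro g _ hg
    rw [hcomm, hF]
    have : h * g⁻¹ ≠ 1 := fun h' => hg (mul_inv_eq_one.1 h').symm
    simp [he, this]
  · simp

/-- **Projectivity over a `p`-group is detected by `H¹`** (cf. Proposition 2 of the paper,
finite-group analogue): for a field `k` of characteristic `p`, a finite `p`-group `G` and
a `k`-linear representation `ρ` of `G` on `V` (not necessarily finite-dimensional),
`V` is projective as a module over the group algebra `k[G]` if and only if the first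
group cohomology `H¹(G, V)` vanishes. -/
theorem stmt8 (p : ℕ) (hp : p.Prime) (k : Type) [Field k] [CharP k p]
    (G : Type) [Group G] [Finite G] (hG : IsPGroup p G)
    (V : Type) [AddCommGroup V] [Module k V] (ρ : Representation k G V) :
    Module.Projective (MonoidAlgebra k G) ρ.asModule ↔
      Subsingleton (groupCohomology (Rep.of ρ) 1) := by
  have := Fintype.ofFinite G
  rw [subsingleton_H1_iff]
  constructor
  · intro hP f hf
    obtain ⟨θ₀, hθ₀⟩ := higman_exists (k := k) (G := G) hP
    obtain ⟨θ, hθ⟩ : ∃ θ : V →ₗ[k] V, ∀ v : V, ∑ g : G, ρ g⁻¹ (θ (ρ g v)) = v := by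
      refine ⟨θ₀, fun v => ?_⟩
      refine Eq.trans ?_ (hθ₀ v)
      refine Finset.sum_congr rfl fun g _ => ?_
      symm
      refine (Representation.single_smul (ρ := ρ) _ _ _).trans ?_
      rw [one_smul]
      refine congrArg (fun x => ρ g⁻¹ (θ₀ x)) ?_
      refine (Representation.single_smul (ρ := ρ) _ _ _).trans ?_
      rw [one_smul]
      rfl
    have hθ' : ∀ v : V, ∑ g : G, ρ g (θ (ρ g⁻¹ v)) = v := by
      intro v
      refine Eq.trans ?_ (hθ v)
      rw [← Equiv.sum_comp (Equiv.inv G)]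
      simp
    let v : V := ∑ h : G, ρ h (θ (ρ h⁻¹ (f h)))
    refine ⟨-v, fun g => ?_⟩
    have h1 : ρ g v = v - f g := by
      have h2 : v - f g = ∑ h : G, ρ h (θ (ρ h⁻¹ (f h - f g))) := by
        conv_lhs => rw [← hθ' (f g)]
        rw [← Finset.sum_sub_distrib]
        refine Finset.sum_congr rfl fun h _ => ?_
        simp only [map_sub]
      rw [h2, map_sum,
        ← Equiv.sum_comp (Equiv.mulLeft g) (fun h => ρ h (θ (ρ h⁻¹ (f h - f g))))]
      refine Finset.sum_congr rfl fun h _ => ?_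
      simp only [Equiv.coe_mulLeft, hf, add_sub_cancel_right, mul_inv_rev]
      rw [map_mul, Module.End.mul_apply, map_mul, Module.End.mul_apply,
        Representation.inv_self_apply]
    rw [map_neg, h1]
    abel
  · intro H
    obtain ⟨θ, hθ⟩ := exists_theta hp hG ρ H
    refine higman_projective (k := k) (G := G) (P := ρ.asModule) θ fun v => ?_
    refine Eq.trans ?_ (hθ v)
    refine Finset.sum_congr rfl fun g _ => ?_
    rw [Representation.single_smul, Representation.single_smul, one_smul, one_smul]
    rfl
end

section
/- Let k be a field and A a finite-dimensional associative unital k-algebra such that A is isomorphic, as a left A-module, to its k-linear dual A* = Hom_k(A, k) equipped with the left A-action (a·f)(b) = f(ba). Then an A-module M (not necessarily finite-dimensional) is projective if and only if it is injective. -/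
universe u v w


section FrobHelpers

variable {k : Type*} [Field k] {A : Type*} [Ring A] [Algebra k A]
  {ι : Type*} [Fintype ι]

/-- A pair of dual bases for a linear form. -/
structure FrobData (c : A →ₗ[k] k) (b d : ι → A) : Prop where
  left : ∀ x : A, ∑ i, c (x * d i) • b i = x
  right : ∀ x : A, ∑ i, c (b i * x) • d i = x

variable {M N : Type*} [AddCommGroup M] [Module A M] [Module k M] [IsScalarTower k A M]
  [AddCommGroup N] [Module A N] [Module k N] [IsScalarTower k A N]

theorem FrobData.casimir {c : A →ₗ[k] k} {b d : ι → A} (h : FrobData c b d)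
    (φ : M →ₗ[k] N) (a : A) (m : M) :
    ∑ i, d i • φ (b i • a • m) = a • ∑ i, d i • φ (b i • m) := by
  have h1 : ∀ i, d i • φ (b i • a • m) = ∑ j, c (b i * a * d j) • (d i • φ (b j • m)) := by
    intro i
    conv_lhs => rw [← mul_smul, ← h.left (b i * a)]
    rw [Finset.sum_smul, map_sum, Finset.smul_sum]
    refine Finset.sum_congr rfl fun j _ => ?_
    rw [smul_assoc, map_smul, smul_algebra_smul_comm]
  have h2 : ∀ j, a • d j • φ (b j • m) = ∑ i, c (b i * a * d j) • (d i • φ (b j • m)) := by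
    intro j
    conv_lhs => rw [← mul_smul, ← h.right (a * d j)]
    rw [Finset.sum_smul]
    refine Finset.sum_congr rfl fun i _ => ?_
    rw [smul_assoc, mul_assoc]
  rw [Finset.smul_sum]
  simp_rw [h1, h2]
  exact Finset.sum_comm

/-- The relative trace of a `k`-linear map. -/
def FrobData.tr {c : A →ₗ[k] k} {b d : ι → A} (h : FrobData c b d)
    (φ : M →ₗ[k] N) : M →ₗ[A] N where
  toFun m := ∑ i, d i • φ (b i • m)
  map_add' x y := by simp [smul_add, Finset.sum_add_distrib]
  map_smul' a m := h.casimir φ a m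

theorem FrobData.tr_apply {c : A →ₗ[k] k} {b d : ι → A} (h : FrobData c b d)
    (φ : M →ₗ[k] N) (m : M) : h.tr φ m = ∑ i, d i • φ (b i • m) := rfl

theorem FrobData.exists_of_projective {c : A →ₗ[k] k} {b d : ι → A} (h : FrobData c b d)
    (hM : Module.Projective A M) : ∃ θ : M →ₗ[k] M, ∀ m, ∑ i, d i • θ (b i • m) = m := by
  obtain ⟨s, hs⟩ := hM.out
  let p : (M →₀ A) →ₗ[A] M := Finsupp.linearCombination A id
  let t : (M →₀ A) →ₗ[k] (M →₀ A) :=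
    Finsupp.mapRange.linearMap ((Algebra.linearMap k A).comp c)
  refine ⟨(p.restrictScalars k).comp (t.comp (s.restrictScalars k)), fun m => ?_⟩
  have ht : ∀ x : M →₀ A, ∑ i, d i • t (b i • x) = x := by
    intro x
    ext y
    conv_rhs => rw [← h.right (x y)]
    rw [Finsupp.finsetSum_apply]
    refine Finset.sum_congr rfl fun i _ => ?_
    rw [Algebra.smul_def, Algebra.commutes]
    change _ = d i * algebraMap k A (c (b i * x y))
    rfl
  have := congrArg p (ht (s m))
  rw [map_sum] at this
  simp only [map_smul] at this
  have h3 := this.trans (hs m)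
  conv_rhs => rw [← h3]
  refine Finset.sum_congr rfl fun i _ => ?_
  change d i • p (t (s (b i • m))) = d i • p (t (b i • s m))
  rw [s.map_smul]

theorem FrobData.injective {c : A →ₗ[k] k} {b d : ι → A} (h : FrobData c b d)
    (θ : M →ₗ[k] M) (hθ : ∀ m, ∑ i, d i • θ (b i • m) = m) : Module.Injective A M := by
  refine ⟨fun X Y _ _ _ _ f hf g => ?_⟩
  let _ : Module k X := Module.compHom X (algebraMap k A)
  let _ : Module k Y := Module.compHom Y (algebraMap k A)
  have : IsScalarTower k A X := ⟨fun r a x => by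
    rw [Algebra.smul_def, mul_smul]; rfl⟩
  have : IsScalarTower k A Y := ⟨fun r a x => by
    rw [Algebra.smul_def, mul_smul]; rfl⟩
  obtain ⟨r, hr⟩ := (f.restrictScalars k).exists_leftInverse_of_injective
    (LinearMap.ker_eq_bot.2 hf)
  have hr' : ∀ x, r (f x) = x := fun x => LinearMap.congr_fun hr x
  refine ⟨h.tr (θ.comp ((g.restrictScalars k).comp r)), fun x => ?_⟩
  rw [h.tr_apply]
  conv_rhs => rw [← hθ (g x)]
  refine Finset.sum_congr rfl fun i _ => ?_
  change d i • θ (g (r (b i • f x))) = d i • θ (b i • g x)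
  rw [← f.map_smul, hr', g.map_smul]

theorem FrobData.projective {c : A →ₗ[k] k} {b d : ι → A} (h : FrobData c b d)
    (θ : M →ₗ[k] M) (hθ : ∀ m, ∑ i, d i • θ (b i • m) = m) : Module.Projective A M := by
  let p : (M →₀ A) →ₗ[A] M := Finsupp.linearCombination A id
  have hp : Function.Surjective p := Finsupp.linearCombination_id_surjective A M
  obtain ⟨s, hs⟩ := (p.restrictScalars k).exists_rightInverse_of_surjective
    (LinearMap.range_eq_top.2 hp)
  have hs' : ∀ x, p (s x) = x := fun x => LinearMap.congr_fun hs x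
  refine ⟨h.tr (s.comp θ), fun m => ?_⟩
  change p _ = m
  rw [h.tr_apply, map_sum]
  conv_rhs => rw [← hθ m]
  refine Finset.sum_congr rfl fun i _ => ?_
  simp [hs']

open TensorProduct in
theorem FrobData.exists_of_baer {c : A →ₗ[k] k} {b d : ι → A} (h : FrobData c b d)
    (hM : Module.Baer A M) : ∃ θ : M →ₗ[k] M, ∀ m, ∑ i, d i • θ (b i • m) = m := by
  let u : M →ₗ[k] A ⊗[k] M := TensorProduct.mk k A M 1
  let j : M →ₗ[A] A ⊗[k] M := h.tr u
  let q : A ⊗[k] M →ₗ[k] M := TensorProduct.lift ((LinearMap.lsmul k M).comp c)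
  have hq : ∀ m, q (j m) = m := by
    intro m
    have : j m = ∑ i, d i • u (b i • m) := rfl
    rw [this, map_sum]
    have h1 := congrArg (fun x : A => x • m) (h.left 1)
    simp only [Finset.sum_smul, one_smul, one_mul, smul_assoc] at h1
    conv_rhs => rw [← h1]
    refine Finset.sum_congr rfl fun i _ => ?_
    simp [u, q, TensorProduct.smul_tmul']
  have hj : Function.Injective j := Function.LeftInverse.injective hq
  obtain ⟨ρ, hρ⟩ := hM.extension_property j hj LinearMap.id
  refine ⟨(ρ.restrictScalars k).comp u, fun m => ?_⟩
  have h1 : ρ (j m) = m := LinearMap.congr_fun hρ m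
  have h2 : j m = ∑ i, d i • u (b i • m) := rfl
  rw [h2, map_sum] at h1
  simpa using h1

end FrobHelpers

/-- **Frobenius algebras: projective = injective.**
Let `A` be a finite-dimensional `k`-algebra which is isomorphic, as a left `A`-module, to
its `k`-linear dual `A* = Hom_k(A, k)` with left `A`-action `(a • f) b = f (b * a)`.
(The hypothesis `he` says precisely that the `k`-linear equivalence `e : A ≃ A*`
intertwines left multiplication on `A` with this action on `A*`.)
Then an `A`-module `M` (not necessarily finite-dimensional) is projective if and only if
it is injective. -/
theorem stmt12 (k : Type u) [Field k] (A : Type v) [Ring A] [Algebra k A]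
    [FiniteDimensional k A]
    (e : A ≃ₗ[k] (A →ₗ[k] k))
    (he : ∀ (a x b : A), e (a * x) b = e x (b * a))
    (M : Type w) [AddCommGroup M] [Module A M] :
    Module.Projective A M ↔ Module.Injective A M := by
  classical
  let bs := Module.finBasis k A
  let d := fun i => e.symm (bs.coord i)
  have hc : ∀ x y, e 1 (y * x) = e x y := fun x y => by rw [← he x 1 y, mul_one]
  have h : FrobData (e 1) bs d := by
    constructor
    · intro x
      simp only [hc, d, LinearEquiv.apply_symm_apply]
      exact bs.sum_repr x
    · intro x
      apply e.injective
      apply bs.ext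
      intro j
      simp [hc, d, Finsupp.single_apply]
  let _ : Module k M := Module.compHom M (algebraMap k A)
  have : IsScalarTower k A M := ⟨fun r a x => by
    rw [Algebra.smul_def, mul_smul]; rfl⟩
  constructor
  · intro hM
    obtain ⟨θ, hθ⟩ := h.exists_of_projective hM
    exact h.injective θ hθ
  · intro hM
    rcases subsingleton_or_nontrivial M with hs | hn
    · exact h.projective (0 : M →ₗ[k] M) fun m => Subsingleton.elim _ _
    · obtain ⟨m, hm⟩ := exists_ne (0 : M)
      have : Small.{w} k := small_of_injective (smul_left_injective k hm)
      have : Small.{w} A := small_of_injective bs.equivFun.injective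
      obtain ⟨θ, hθ⟩ := h.exists_of_baer (Module.Baer.of_injective hM)
      exact h.projective θ hθ
end
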